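/- arXiv:2010.04521 — 3 statements merged into one kernel-verified Lean document; each statement's English description precedes it below -/
import Mathlib

section
/- Let n ≥ 2, let Q be an n×n Laplacian matrix, let ζ = diag(Q†), r = (1/2)·Q·ζ + u/n, R² = (1/2)·ζᵀ·(r + u/n), and let Ω be the matrix with entries Ω i j = ζ_i + ζ_j − 2(Q†) i j. Then Ω·r = (rᵀ·Ω·r)·u and rᵀ·Ω·r = 2R². -/
open Matrix

/-- A Laplacian matrix: symmetric, nonpositive off-diagonal entries, zero row sums,
and irreducible. -/
def IsLaplacian {m : Type*} [Fintype m] [DecidableEq m] (Q : Matrix m m ℝ) : Prop :=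
  Q.IsSymm ∧ (∀ i j, i ≠ j → Q i j ≤ 0) ∧ (Q *ᵥ (fun _ => (1 : ℝ)) = 0) ∧
  ∀ V : Finset m, V.Nonempty → V ≠ Finset.univ → ∃ i ∈ V, ∃ j ∉ V, Q i j ≠ 0

/-- `B` is the Moore–Penrose pseudoinverse of `A`. -/
def IsMoorePenrose {k l : Type*} [Fintype k] [Fintype l]
    (A : Matrix k l ℝ) (B : Matrix l k ℝ) : Prop :=
  A * B * A = A ∧ B * A * B = B ∧ (A * B)ᵀ = A * B ∧ (B * A)ᵀ = B * A

theorem ker_const {n : ℕ} (hn : 2 ≤ n) (Q : Matrix (Fin n) (Fin n) ℝ)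
    (hQ : IsLaplacian Q) (x : Fin n → ℝ) (hx : Q *ᵥ x = 0) : ∃ c, ∀ i, x i = c := by
  obtain ⟨_, hneg, hu, hirr⟩ := hQ
  haveI : Nonempty (Fin n) := ⟨⟨0, by omega⟩⟩
  obtain ⟨m, hm⟩ := Finite.exists_max x
  refine ⟨x m, ?_⟩
  by_contra hcon
  obtain ⟨i, hi, j, hj, hij⟩ := hirr (Finset.univ.filter (fun i => x i = x m)) ⟨m, by simp⟩ (by
    intro h
    apply hcon
    intro i
    have : i ∈ Finset.univ.filter (fun i => x i = x m) := by rw [h]; simp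
    simpa using this)
  simp only [Finset.mem_filter, Finset.mem_univ, true_and] at hi hj
  have h0 : ∑ k, Q i k * (x k - x m) = 0 := by
    have h1 := congrFun hx i
    have h2 := congrFun hu i
    simp only [Matrix.mulVec, dotProduct, Pi.zero_apply, mul_one] at h1 h2
    simp only [mul_sub, Finset.sum_sub_distrib, ← Finset.sum_mul, h1, h2]
    ring
  have hnn : ∀ k ∈ Finset.univ, 0 ≤ Q i k * (x k - x m) := by
    intro k _
    by_cases hk : i = k
    · subst hk; simp [hi]
    · exact mul_nonneg_of_nonpos_of_nonpos (hneg i k hk) (sub_nonpos.2 (hm k))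
  have h3 := (Finset.sum_eq_zero_iff_of_nonneg hnn).1 h0 j (Finset.mem_univ j)
  rcases mul_eq_zero.1 h3 with h | h
  · exact hij h
  · exact hj (sub_eq_zero.1 h)

/-- For a Laplacian, `Q† Q x = x - mean x`. -/
theorem pinv_mul {n : ℕ} (hn : 2 ≤ n) (Q : Matrix (Fin n) (Fin n) ℝ)
    (hQ : IsLaplacian Q) (Qd : Matrix (Fin n) (Fin n) ℝ) (hQd : IsMoorePenrose Q Qd)
    (x : Fin n → ℝ) (i : Fin n) : (Qd *ᵥ (Q *ᵥ x)) i = x i - (n : ℝ)⁻¹ * ∑ k, x k := by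
  obtain ⟨h1, _, _, h4⟩ := hQd
  have hker : Q *ᵥ (x - Qd *ᵥ (Q *ᵥ x)) = 0 := by
    rw [Matrix.mulVec_sub, Matrix.mulVec_mulVec, Matrix.mulVec_mulVec, h1,
      sub_self]
  obtain ⟨c, hc⟩ := ker_const hn Q hQ _ hker
  have hs : (fun _ => (1 : ℝ)) ⬝ᵥ (Qd *ᵥ (Q *ᵥ x)) = 0 := by
    rw [Matrix.mulVec_mulVec, Matrix.dotProduct_mulVec, ← h4, Matrix.vecMul_transpose,
      ← Matrix.mulVec_mulVec, hQ.2.2.1]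
    simp
  have hs2 : ∑ k, (Qd *ᵥ (Q *ᵥ x)) k = 0 := by simpa [dotProduct] using hs
  have hsum : ∑ k, x k = n * c := by
    have := Finset.sum_congr rfl (fun k (_ : k ∈ Finset.univ) => hc k)
    simp only [Pi.sub_apply, Finset.sum_sub_distrib, hs2, Finset.sum_const, Finset.card_univ,
      Fintype.card_fin, nsmul_eq_mul] at this
    linarith
  have hn0 : (n : ℝ) ≠ 0 := by positivity
  have hi := hc i
  simp only [Pi.sub_apply] at hi
  rw [hsum, inv_mul_cancel_left₀ hn0]
  linarith

theorem stmt_9 {n : ℕ} (hn : 2 ≤ n) (Q : Matrix (Fin n) (Fin n) ℝ)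
    (hQ : IsLaplacian Q)
    (Qd : Matrix (Fin n) (Fin n) ℝ) (hQd : IsMoorePenrose Q Qd)
    (ζ : Fin n → ℝ) (hζ : ∀ i, ζ i = Qd i i)
    (r : Fin n → ℝ)
    (hr : r = (1 / 2 : ℝ) • (Q *ᵥ ζ) + (n : ℝ)⁻¹ • (fun _ => (1 : ℝ)))
    (R2 : ℝ)
    (hR2 : R2 = (1 / 2 : ℝ) * (ζ ⬝ᵥ (r + (n : ℝ)⁻¹ • (fun _ => (1 : ℝ)))))
    (Ω : Matrix (Fin n) (Fin n) ℝ)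
    (hΩ : ∀ i j, Ω i j = ζ i + ζ j - 2 * Qd i j) :
    Ω *ᵥ r = (r ⬝ᵥ (Ω *ᵥ r)) • (fun _ => (1 : ℝ)) ∧
    r ⬝ᵥ (Ω *ᵥ r) = 2 * R2 := by
  have hn0 : (n : ℝ) ≠ 0 := by positivity
  have hP := pinv_mul hn Q hQ Qd hQd ζ
  obtain ⟨hsymm, _, hu, _⟩ := hQ
  obtain ⟨_, h2, h3, _⟩ := hQd
  have hdu : Qd *ᵥ (fun _ => (1 : ℝ)) = 0 := by
    have hQQ : (Q * Qd) *ᵥ (fun _ => (1 : ℝ)) = 0 := by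
      rw [← h3, Matrix.transpose_mul, hsymm.eq, ← Matrix.mulVec_mulVec, hu, Matrix.mulVec_zero]
    rw [← h2, Matrix.mul_assoc, ← Matrix.mulVec_mulVec, hQQ, Matrix.mulVec_zero]
  have hQs : ∑ k, (Q *ᵥ ζ) k = 0 := by
    have : (fun _ => (1 : ℝ)) ⬝ᵥ (Q *ᵥ ζ) = 0 := by
      rw [Matrix.dotProduct_mulVec, ← hsymm.eq, Matrix.vecMul_transpose, hu]
      simp
    simpa [dotProduct] using this
  have hrs : ∑ k, r k = 1 := by
    rw [hr]
    simp only [Pi.add_apply, Pi.smul_apply, smul_eq_mul, Finset.sum_add_distrib,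
      ← Finset.mul_sum, hQs]
    simp [hn0]
  have hdr : ∀ i, (Qd *ᵥ r) i = (1 / 2) * (ζ i - (n : ℝ)⁻¹ * ∑ k, ζ k) := by
    intro i
    rw [hr, Matrix.mulVec_add, Matrix.mulVec_smul, Matrix.mulVec_smul, hdu]
    simp only [Pi.add_apply, Pi.smul_apply, smul_eq_mul, hP i]
    simp
  have hR : 2 * R2 = ζ ⬝ᵥ r + (n : ℝ)⁻¹ * ∑ k, ζ k := by
    rw [hR2, dotProduct_add, dotProduct_smul]
    simp [dotProduct]
  have hΩr : ∀ i, (Ω *ᵥ r) i = 2 * R2 := by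
    intro i
    have e : (Ω *ᵥ r) i = ζ i * ∑ k, r k + ζ ⬝ᵥ r - 2 * (Qd *ᵥ r) i := by
      simp only [Matrix.mulVec, dotProduct, hΩ, Finset.mul_sum, ← Finset.sum_add_distrib,
        ← Finset.sum_sub_distrib]
      exact Finset.sum_congr rfl (fun k _ => by ring)
    rw [e, hrs, hdr, hR]
    ring
  have hfin : r ⬝ᵥ (Ω *ᵥ r) = 2 * R2 := by
    simp only [dotProduct, hΩr, ← Finset.sum_mul, hrs, one_mul]
  refine ⟨?_, hfin⟩
  rw [hfin]
  ext i
  simp [hΩr]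
end

section
/- Let n ≥ 2, let Q be an n×n Laplacian matrix, and let V be a proper subset of the index set with |V| ≥ 2. Then the Schur complement Q/V^c = Q_{VV} − Q_{VV^c}·(Q_{V^cV^c})⁻¹·Q_{V^cV} is again a Laplacian matrix: it is symmetric, has all off-diagonal entries ≤ 0, has zero row sums, and is irreducible. -/
open Matrix

/-- The Schur complement `Q/Vᶜ` of `Q` with respect to the removed index set `Vᶜ`
(keeping the indices in `V`): `Q_{VV} − Q_{VVᶜ}·(Q_{VᶜVᶜ})⁻¹·Q_{VᶜV}`. -/
noncomputable def schurKeep {m : Type*} [Fintype m] [DecidableEq m]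
    (Q : Matrix m m ℝ) (V : Finset m) : Matrix ↥V ↥V ℝ :=
  Q.submatrix (Subtype.val : ↥V → m) (Subtype.val : ↥V → m) -
    Q.submatrix (Subtype.val : ↥V → m) (Subtype.val : ↥(Vᶜ) → m) *
      (Q.submatrix (Subtype.val : ↥(Vᶜ) → m) (Subtype.val : ↥(Vᶜ) → m))⁻¹ *
      Q.submatrix (Subtype.val : ↥(Vᶜ) → m) (Subtype.val : ↥V → m)

section aux
variable {m : Type*} [Fintype m] [DecidableEq m]

/-- Minimum principle. -/
theorem min_principle {Q : Matrix m m ℝ} (hQ : IsLaplacian Q) (V : Finset m) (hV : V.Nonempty)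
    (f : m → ℝ) (hf : ∀ i ∈ V, 0 ≤ f i) (hQf : ∀ i ∉ V, 0 ≤ (Q *ᵥ f) i) : ∀ i, 0 ≤ f i := by
  obtain ⟨hs, ho, hr, hi⟩ := hQ
  obtain ⟨v, hv⟩ := hV
  obtain ⟨a, -, ha⟩ := Finset.exists_min_image Finset.univ f ⟨v, Finset.mem_univ v⟩
  by_contra! hneg
  obtain ⟨b, hb⟩ := hneg
  have hfa : f a < 0 := lt_of_le_of_lt (ha b (Finset.mem_univ _)) hb
  obtain ⟨i, hiS, j, hjS, hij⟩ := hi (Finset.univ.filter (fun k => f k = f a))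
    ⟨a, by simp⟩ (by
      intro h
      have : v ∈ Finset.univ.filter (fun k => f k = f a) := by rw [h]; simp
      have h1 := (Finset.mem_filter.1 this).2
      have := hf v hv
      linarith)
  have hia : f i = f a := by simpa using hiS
  have hja : f j ≠ f a := by simpa using hjS
  have hne : i ≠ j := by rintro rfl; exact hja hia
  have hiV : i ∉ V := fun h => by have := hf i h; linarith
  have h0 := hQf i hiV
  have hrow : ∑ k, Q i k = 0 := by
    have := congrFun hr i
    simpa [mulVec, dotProduct] using this
  have hexp : (Q *ᵥ f) i = ∑ k, Q i k * (f k - f a) := by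
    simp only [mulVec, dotProduct, mul_sub, Finset.sum_sub_distrib, ← Finset.sum_mul, hrow]
    ring
  have hlt : ∑ k, Q i k * (f k - f a) < ∑ k : m, (0:ℝ) := by
    apply Finset.sum_lt_sum
    · intro k _
      by_cases hk : i = k
      · subst hk; simp [hia]
      · exact mul_nonpos_of_nonpos_of_nonneg (ho i k hk)
          (sub_nonneg.2 (ha k (Finset.mem_univ _)))
    · refine ⟨j, Finset.mem_univ _, mul_neg_of_neg_of_pos ?_ ?_⟩
      · exact lt_of_le_of_ne (ho i j hne) hij
      · exact sub_pos.2 (lt_of_le_of_ne (ha j (Finset.mem_univ _)) (Ne.symm hja))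
  simp at hlt
  linarith

theorem zero_principle {Q : Matrix m m ℝ} (hQ : IsLaplacian Q) (V : Finset m) (hV : V.Nonempty)
    (f : m → ℝ) (hf : ∀ i ∈ V, f i = 0) (hQf : ∀ i ∉ V, (Q *ᵥ f) i = 0) : ∀ i, f i = 0 := by
  intro i
  have h1 := min_principle hQ V hV f (fun i h => (hf i h).ge) (fun i h => (hQf i h).ge) i
  have h2 := min_principle hQ V hV (-f) (fun i h => by simp [hf i h])
    (fun i h => by simp [mulVec_neg, hQf i h]) i
  simp at h2
  linarith

theorem mulVec_split (Q : Matrix m m ℝ) (V : Finset m) (f : m → ℝ) (i : m) :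
    (Q *ᵥ f) i = ∑ v : ↥V, Q i v * f v + ∑ w : ↥(Vᶜ), Q i w * f w := by
  rw [Finset.sum_coe_sort V (fun k => Q i k * f k), Finset.sum_coe_sort Vᶜ (fun k => Q i k * f k),
    Finset.sum_add_sum_compl]
  rfl

theorem isUnit_cc {Q : Matrix m m ℝ} (hQ : IsLaplacian Q) (V : Finset m) (hV : V.Nonempty) :
    IsUnit (Q.submatrix (Subtype.val : ↥(Vᶜ) → m) (Subtype.val : ↥(Vᶜ) → m)) := by
  rw [← Matrix.mulVec_injective_iff_isUnit]
  intro x y hxy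
  let f : m → ℝ := fun i => if h : i ∈ Vᶜ then x ⟨i, h⟩ - y ⟨i, h⟩ else 0
  have hfV : ∀ i ∈ V, f i = 0 := fun i hi => by simp [f, hi]
  have hfc : ∀ w : ↥(Vᶜ), f w = x w - y w := fun w => by
    have := w.2
    simp only [f, dif_pos this]
  have := zero_principle hQ V hV f hfV (by
    intro i hi
    rw [mulVec_split Q V]
    have h1 : ∑ v : ↥V, Q i v * f v = 0 :=
      Finset.sum_eq_zero (fun v _ => by rw [hfV v v.2, mul_zero])
    have h2 := congrFun hxy ⟨i, by simpa using hi⟩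
    simp only [mulVec, dotProduct, submatrix_apply] at h2
    simp only [h1, hfc, mul_sub, Finset.sum_sub_distrib, h2]
    ring)
  ext w
  have h3 := this w
  rw [hfc] at h3
  linarith

theorem harmonic_ext {Q : Matrix m m ℝ} (hQ : IsLaplacian Q) (V : Finset m) (hV : V.Nonempty)
    (g : ↥V → ℝ) : ∃ f : m → ℝ, (∀ v : ↥V, f v = g v) ∧ (∀ i ∉ V, (Q *ᵥ f) i = 0) ∧
      ∀ v : ↥V, (Q *ᵥ f) v = (schurKeep Q V *ᵥ g) v := by
  have hu := isUnit_cc hQ V hV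
  set C := Q.submatrix (Subtype.val : ↥(Vᶜ) → m) (Subtype.val : ↥(Vᶜ) → m) with hC
  set B := Q.submatrix (Subtype.val : ↥(Vᶜ) → m) (Subtype.val : ↥V → m) with hB
  have hdet : IsUnit C.det := (Matrix.isUnit_iff_isUnit_det _).1 hu
  let x : ↥(Vᶜ) → ℝ := C⁻¹ *ᵥ (B *ᵥ g)
  have hx : C *ᵥ x = B *ᵥ g := by
    simp only [x]
    rw [mulVec_mulVec, Matrix.mul_nonsing_inv C hdet, one_mulVec]
  let f : m → ℝ := fun i => if h : i ∈ V then g ⟨i, h⟩ else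
    - x ⟨i, Finset.mem_compl.2 h⟩
  have hfV : ∀ v : ↥V, f v = g v := fun v => by
    have := v.2
    simp only [f, dif_pos this]
  have hfc : ∀ w : ↥(Vᶜ), f w = - x w := fun w => by
    have := Finset.mem_compl.1 w.2
    simp only [f, dif_neg this]
  refine ⟨f, hfV, ?_, ?_⟩
  · intro i hi
    rw [mulVec_split Q V]
    have h2 := congrFun hx ⟨i, by simpa using hi⟩
    simp only [mulVec, dotProduct, hC, hB, submatrix_apply] at h2
    simp only [hfV, hfc, mul_neg, Finset.sum_neg_distrib]
    rw [← h2]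
    simp [mulVec, dotProduct]
  · intro v
    rw [mulVec_split Q V]
    simp only [hfV, hfc, mul_neg, Finset.sum_neg_distrib]
    simp only [schurKeep, sub_mulVec, ← mulVec_mulVec, Pi.sub_apply]
    rw [← hC, ← hB, sub_eq_add_neg]
    rfl

theorem schur_laplacian {Q : Matrix m m ℝ} (hQ : IsLaplacian Q) (V : Finset m)
    (hV : V.Nonempty) : IsLaplacian (schurKeep Q V) := by
  have hsym : (schurKeep Q V).IsSymm := by
    have hs : Qᵀ = Q := hQ.1
    unfold Matrix.IsSymm schurKeep
    simp only [transpose_sub, transpose_mul, transpose_nonsing_inv, transpose_submatrix, hs,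
      Matrix.mul_assoc]
  have hrow : schurKeep Q V *ᵥ (fun _ => (1:ℝ)) = 0 := by
    obtain ⟨f, h1, h2, h3⟩ := harmonic_ext hQ V hV (fun _ => 1)
    have hz := zero_principle hQ V hV (f - fun _ => 1)
      (fun i hi => by simp [h1 ⟨i, hi⟩])
      (fun i hi => by rw [mulVec_sub, hQ.2.2.1]; simp [h2 i hi])
    have hf : f = fun _ => 1 := by
      ext i
      have := hz i
      simp at this
      linarith
    ext v
    rw [← h3, hf, hQ.2.2.1]
    rfl
  refine ⟨hsym, ?_, hrow, ?_⟩
  · intro i j hij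
    obtain ⟨f, h1, h2, h3⟩ := harmonic_ext hQ V hV (Pi.single j 1)
    have hf := min_principle hQ V hV f (fun i hi => by
      rw [h1 ⟨i, hi⟩]
      by_cases h : (⟨i, hi⟩ : ↥V) = j
      · rw [h]; simp
      · simp [Pi.single_eq_of_ne h]) (fun i hi => (h2 i hi).ge)
    have h4 := h3 i
    rw [mulVec_single_one] at h4
    change _ = schurKeep Q V i j at h4
    rw [← h4]
    apply Finset.sum_nonpos
    intro k _
    by_cases hk : (i : m) = k
    · rw [← hk, h1 i, Pi.single_eq_of_ne hij, mul_zero]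
    · exact mul_nonpos_of_nonpos_of_nonneg (hQ.2.1 i k hk) (hf k)
  · intro W hW hWu
    by_contra! hcon
    obtain ⟨f, h1, h2, h3⟩ := harmonic_ext hQ V hV (fun v => if v ∈ W then 1 else 0)
    have hS : ∀ v : ↥V, (schurKeep Q V *ᵥ (fun v => if v ∈ W then (1:ℝ) else 0)) v = 0 := by
      intro v
      by_cases hv : v ∈ W
      · refine Eq.trans ?_ (congrFun hrow v)
        apply Finset.sum_congr rfl
        intro k _
        by_cases hk : k ∈ W
        · simp [hk]
        · simp [hk, hcon v hv k hk]
      · apply Finset.sum_eq_zero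
        intro k _
        by_cases hk : k ∈ W
        · have := hcon k hk v hv
          rw [← hsym.apply] at this
          simp [this]
        · simp [hk]
    have hQf : Q *ᵥ f = 0 := by
      ext i
      by_cases hi : i ∈ V
      · have := h3 ⟨i, hi⟩
        rw [hS] at this
        exact this
      · exact h2 i hi
    obtain ⟨a, ha⟩ := hW
    obtain ⟨b, hb⟩ : ∃ b, b ∉ W := by
      by_contra! h
      exact hWu (Finset.eq_univ_iff_forall.2 h)
    have := zero_principle hQ {(b : m)} ⟨_, Finset.mem_singleton_self _⟩ f
      (fun i hi => by rw [Finset.mem_singleton.1 hi, h1 b]; simp [hb])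
      (fun i _ => congrFun hQf i) a
    rw [h1 a] at this
    simp [ha] at this

end aux

/-- Closure: the Schur complement of a Laplacian matrix is again a Laplacian matrix. -/
theorem stmt_14 {n : ℕ} (hn : 2 ≤ n) (Q : Matrix (Fin n) (Fin n) ℝ)
    (hQ : IsLaplacian Q)
    (V : Finset (Fin n)) (hVu : V ≠ Finset.univ) (hcard : 2 ≤ V.card) :
    IsLaplacian (schurKeep Q V) := by
  exact schur_laplacian hQ V (Finset.card_pos.1 (by omega))
end

section
/- Let n ≥ 2, let Q be an n×n Laplacian matrix, let V be a nonempty proper subset of the index set with |V| = v ≥ 2, and let C = I − u·uᵀ/v be the v×v centering matrix. Then all off-diagonal entries of the Moore–Penrose pseudoinverse of C·(Q†)_{VV}·C are ≤ 0; that is, every face of a hyperacute Simplex is again a hyperacute Simplex. -/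
open Matrix

/-- The centering matrix `I − u·uᵀ/v` on the index set `V`. -/
noncomputable def centering {m : Type*} [Fintype m] [DecidableEq m] (V : Finset m) :
    Matrix ↥V ↥V ℝ :=
  1 - (V.card : ℝ)⁻¹ • Matrix.of (fun _ _ => (1 : ℝ))

lemma lap_energy {n : ℕ} {Q : Matrix (Fin n) (Fin n) ℝ} (hQ : IsLaplacian Q) (x : Fin n → ℝ)
    (hx : ∑ i, ∑ j, x i * Q i j * x j ≤ 0) : ∀ i j, x i = x j := by
  obtain ⟨hs, hneg, hu, hirr⟩ := hQ
  have hrow : ∀ i, ∑ j, Q i j = 0 := by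
    intro i
    have := congrFun hu i
    simpa [mulVec, dotProduct] using this
  have hcol : ∀ j, ∑ i, Q i j = 0 := by
    intro j
    rw [← hrow j]
    exact Finset.sum_congr rfl fun i _ => hs.apply j i
  have h1 : ∑ i, ∑ j, Q i j * (x i * x i) = 0 := by
    simp [← Finset.sum_mul, hrow]
  have h2 : ∑ i, ∑ j, Q i j * (x j * x j) = 0 := by
    rw [Finset.sum_comm]
    simp [← Finset.sum_mul, hcol]
  have h3 : ∑ i, ∑ j, (-Q i j) * (x i - x j) ^ 2 ≤ 0 := by
    have : ∑ i, ∑ j, (-Q i j) * (x i - x j) ^ 2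
        = 2 * ∑ i, ∑ j, x i * Q i j * x j - ∑ i, ∑ j, Q i j * (x i * x i)
          - ∑ i, ∑ j, Q i j * (x j * x j) := by
      simp only [Finset.mul_sum, ← Finset.sum_sub_distrib]
      refine Finset.sum_congr rfl fun i _ => Finset.sum_congr rfl fun j _ => ?_
      ring
    rw [this, h1, h2]; linarith
  have hnn : ∀ i j, 0 ≤ (-Q i j) * (x i - x j) ^ 2 := by
    intro i j
    by_cases h : i = j
    · simp [h]
    · exact mul_nonneg (by linarith [hneg i j h]) (sq_nonneg _)
  have h4 : ∀ i j, (-Q i j) * (x i - x j) ^ 2 = 0 := by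
    intro i j
    have ha := (Finset.sum_eq_zero_iff_of_nonneg
      (fun i _ => Finset.sum_nonneg fun j _ => hnn i j)).1
      (le_antisymm h3 (Finset.sum_nonneg fun i _ => Finset.sum_nonneg fun j _ => hnn i j))
      i (Finset.mem_univ i)
    exact (Finset.sum_eq_zero_iff_of_nonneg (fun j _ => hnn i j)).1 ha j (Finset.mem_univ j)
  intro i j
  by_contra hne
  obtain ⟨a, ha, b, hb, hab⟩ := hirr (Finset.univ.filter fun k => x k = x i)
    ⟨i, by simp⟩ (by
      intro h
      have : j ∈ Finset.univ.filter fun k => x k = x i := by rw [h]; exact Finset.mem_univ j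
      simp at this
      exact hne this.symm)
  simp at ha hb
  have := h4 a b
  rcases mul_eq_zero.1 this with h | h
  · exact hab (by linarith)
  · have := pow_eq_zero_iff (two_ne_zero) |>.1 h
    exact hb (by linarith)

lemma lap_ker {n : ℕ} {Q : Matrix (Fin n) (Fin n) ℝ} (hQ : IsLaplacian Q) (x : Fin n → ℝ)
    (hx : Q *ᵥ x = 0) : ∀ i j, x i = x j := by
  apply lap_energy hQ
  apply le_of_eq
  refine Finset.sum_eq_zero fun i _ => ?_
  have := congrFun hx i
  simp only [mulVec, dotProduct, Pi.zero_apply] at this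
  simp only [mul_assoc, ← Finset.mul_sum, this, mul_zero]

lemma lap_sum {n : ℕ} {Q : Matrix (Fin n) (Fin n) ℝ} (hQ : IsLaplacian Q) (x : Fin n → ℝ) :
    ∑ i, (Q *ᵥ x) i = 0 := by
  have hcol : ∀ j, ∑ i, Q i j = 0 := by
    intro j
    have := congrFun hQ.2.2.1 j
    simp only [mulVec, dotProduct, mul_one, Pi.zero_apply] at this
    rw [← this]
    exact Finset.sum_congr rfl fun i _ => hQ.1.apply j i
  simp only [mulVec, dotProduct]
  rw [Finset.sum_comm]
  simp [← Finset.sum_mul, hcol]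

lemma lap_solve {n : ℕ} {Q Qd : Matrix (Fin n) (Fin n) ℝ} (hQ : IsLaplacian Q)
    (hQd : IsMoorePenrose Q Qd) (b : Fin n → ℝ) (hb : ∑ i, b i = 0) :
    Q *ᵥ (Qd *ᵥ b) = b := by
  have hs : Qᵀ = Q := hQ.1
  have hP : Q * (Q * Qd) = Q := by
    have h := congrArg Matrix.transpose hQd.1
    rw [transpose_mul, hQd.2.2.1, hs] at h
    exact h
  have hk : Q *ᵥ (Q *ᵥ (Qd *ᵥ b) - b) = 0 := by
    rw [mulVec_sub, mulVec_mulVec, mulVec_mulVec, Matrix.mul_assoc, hP, sub_self]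
  have hc := lap_ker hQ _ hk
  have hsum : ∑ i, (Q *ᵥ (Qd *ᵥ b) - b) i = 0 := by
    simp only [Pi.sub_apply, Finset.sum_sub_distrib, hb, lap_sum hQ, sub_self]
  ext i
  rw [Finset.sum_congr rfl (fun k _ => hc k i)] at hsum
  simp only [Finset.sum_const, Finset.card_univ, Fintype.card_fin, nsmul_eq_mul] at hsum
  have hn : (n : ℝ) ≠ 0 := by
    have := i.pos
    positivity
  have := (mul_eq_zero.1 hsum).resolve_left hn
  simp only [Pi.sub_apply] at this
  linarith

/-- extension by zero -/
def extz {n : ℕ} (V : Finset (Fin n)) (b : ↥V → ℝ) : Fin n → ℝ :=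
  fun i => if h : i ∈ V then b ⟨i, h⟩ else 0

lemma extz_sum {n : ℕ} (V : Finset (Fin n)) (b : ↥V → ℝ) (F : Fin n → ℝ) :
    ∑ i, F i * extz V b i = ∑ i : ↥V, F i * b i := by
  have h1 : ∑ i : ↥V, F i * b i = ∑ i : ↥V, F i * extz V b i := by
    refine Finset.sum_congr rfl fun i _ => ?_
    simp [extz]
  rw [h1, Finset.sum_coe_sort V (fun i => F i * extz V b i)]
  symm
  apply Finset.sum_subset (Finset.subset_univ V)
  intro i _ hi
  simp [extz, hi]

lemma extz_sum1 {n : ℕ} (V : Finset (Fin n)) (b : ↥V → ℝ) :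
    ∑ i, extz V b i = ∑ i : ↥V, b i := by
  simpa using extz_sum V b (fun _ => 1)

lemma centering_mulVec {n : ℕ} (V : Finset (Fin n)) (x : ↥V → ℝ) (i : ↥V) :
    (centering V *ᵥ x) i = x i - (V.card : ℝ)⁻¹ * ∑ k, x k := by
  simp [centering, mulVec, dotProduct, sub_mul, Finset.sum_sub_distrib, Matrix.one_apply,
    Finset.mul_sum]

lemma centering_symm {n : ℕ} (V : Finset (Fin n)) : (centering V)ᵀ = centering V := by
  ext i j
  simp [centering, Matrix.one_apply, eq_comm]

lemma centering_sum {n : ℕ} (V : Finset (Fin n)) (hV : 2 ≤ V.card) (x : ↥V → ℝ) :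
    ∑ i, (centering V *ᵥ x) i = 0 := by
  have : (V.card : ℝ) ≠ 0 := by positivity
  simp only [centering_mulVec, Finset.sum_sub_distrib, Finset.sum_const, Finset.card_univ,
    Fintype.card_coe, nsmul_eq_mul]
  field_simp
  simp

/-- Every face of a hyperacute Simplex is again hyperacute: the pseudoinverse of the
canonical Gram matrix `C·(Q†)_{VV}·C` of a face has nonpositive off-diagonal entries. -/
theorem stmt_15 {n : ℕ} (hn : 2 ≤ n) (Q : Matrix (Fin n) (Fin n) ℝ)
    (hQ : IsLaplacian Q)
    (Qd : Matrix (Fin n) (Fin n) ℝ) (hQd : IsMoorePenrose Q Qd)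
    (V : Finset (Fin n)) (hVu : V ≠ Finset.univ) (hcard : 2 ≤ V.card)
    (B : Matrix ↥V ↥V ℝ)
    (hB : IsMoorePenrose
      (centering V *
        Qd.submatrix (Subtype.val : ↥V → Fin n) (Subtype.val : ↥V → Fin n) *
        centering V) B) :
    ∀ i j : ↥V, i ≠ j → B i j ≤ 0 := by
  set C := centering V with hC
  set G := Qd.submatrix (Subtype.val : ↥V → Fin n) (Subtype.val : ↥V → Fin n) with hG
  set M := C * G * C with hM
  obtain ⟨hB1, hB2, hB3, hB4⟩ := hB
  have hv : (V.card : ℝ) ≠ 0 := by positivity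
  have hCs : Cᵀ = C := centering_symm V
  have hGm : ∀ (b : ↥V → ℝ) (i : ↥V), (Qd *ᵥ extz V b) i = (G *ᵥ b) i := by
    intro b i
    exact extz_sum V b (fun k => Qd i k)
  intro i j hij
  set b : ↥V → ℝ := B *ᵥ Pi.single j 1 with hb
  have hC1 : C *ᵥ (fun _ => (1 : ℝ)) = 0 := by
    ext k
    rw [hC, centering_mulVec]
    simp [hv]
  -- sum of b is zero
  have hsb : ∑ k, b k = 0 := by
    have h1 : (fun _ => (1 : ℝ)) ᵥ* B = 0 := by
      have hc : (fun _ => (1 : ℝ)) ᵥ* C = 0 := by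
        rw [← mulVec_transpose, hCs, hC1]
      have hbm : (fun _ => (1 : ℝ)) ᵥ* (B * M) = 0 := by
        rw [← hB4, transpose_mul, hM, transpose_mul, hCs, ← vecMul_vecMul, ← vecMul_vecMul, hc]
        simp
      rw [← hB2, ← vecMul_vecMul, hbm, zero_vecMul]
    have h2 : (fun _ => (1 : ℝ)) ⬝ᵥ b = 0 := by
      rw [hb, dotProduct_mulVec, h1, zero_dotProduct]
    simpa [dotProduct] using h2
  -- residual
  set z : ↥V → ℝ := Pi.single j 1 - M *ᵥ b with hz
  have hMz : Mᵀ *ᵥ z = 0 := by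
    have h := congrArg Matrix.transpose hB1
    rw [transpose_mul, hB3] at h
    rw [hz, mulVec_sub, hb, mulVec_mulVec, mulVec_mulVec, Matrix.mul_assoc, h, sub_self]
  have hCz : C *ᵥ z = 0 := by
    set w := C *ᵥ z with hw
    have hws : ∑ k, w k = 0 := centering_sum V hcard z
    have hq : w ⬝ᵥ (G *ᵥ w) = 0 := by
      have h0 : z ⬝ᵥ (M *ᵥ z) = 0 := by
        rw [dotProduct_mulVec, ← mulVec_transpose, hMz, zero_dotProduct]
      rw [hM, ← mulVec_mulVec, ← mulVec_mulVec, dotProduct_mulVec, ← mulVec_transpose, hCs] at h0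
      exact h0
    set t := Qd *ᵥ extz V w with ht
    have hQt : Q *ᵥ t = extz V w := lap_solve hQ hQd _ (by rw [extz_sum1, hws])
    have htc : ∀ a c, t a = t c := by
      apply lap_energy hQ
      apply le_of_eq
      have : ∑ a, ∑ c, t a * Q a c * t c = ∑ a, t a * extz V w a := by
        rw [← hQt]
        simp only [mulVec, dotProduct, Finset.mul_sum, mul_assoc]
      rw [this, extz_sum, ← hq]
      simp only [dotProduct, ← hGm, ← ht]
      exact Finset.sum_congr rfl fun a _ => mul_comm _ _
    ext k
    have h1 : extz V w k = 0 := by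
      rw [← hQt]
      have h2 := congrFun hQ.2.2.1 k
      simp only [mulVec, dotProduct, mul_one, Pi.zero_apply] at h2 ⊢
      rw [Finset.sum_congr rfl (fun c _ => by rw [htc c k]), ← Finset.sum_mul, h2, zero_mul]
    simpa [extz] using h1
  have hCb : C *ᵥ b = b := by
    ext k
    rw [hC, centering_mulVec, hsb]; simp
  have hMb : M *ᵥ b = C *ᵥ (G *ᵥ b) := by
    rw [hM, ← mulVec_mulVec, ← mulVec_mulVec, hCb]
  -- G b = e_j + const
  obtain ⟨c, hc⟩ : ∃ c : ℝ, ∀ k, (G *ᵥ b) k = (Pi.single j 1 : ↥V → ℝ) k + c := by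
    refine ⟨(V.card : ℝ)⁻¹ * ∑ k, (G *ᵥ b) k - (V.card : ℝ)⁻¹ * ∑ k, z k, fun k => ?_⟩
    have h1 := congrFun hCz k
    rw [hC, centering_mulVec] at h1
    have h2 : z k = (Pi.single j 1 : ↥V → ℝ) k - (M *ᵥ b) k := rfl
    have h3 := congrFun hMb k
    rw [hC, centering_mulVec] at h3
    simp only [Pi.zero_apply] at h1
    linarith
  set f : Fin n → ℝ := fun k => (Qd *ᵥ extz V b) k - c with hf
  have hQf : ∀ k, ∑ l, Q k l * f l = extz V b k := by
    intro k
    have h1 := congrFun (lap_solve hQ hQd (extz V b) (by rw [extz_sum1, hsb])) k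
    have h2 := congrFun hQ.2.2.1 k
    simp only [mulVec, dotProduct, mul_one, Pi.zero_apply] at h2
    rw [← h1]
    simp only [hf, mul_sub, Finset.sum_sub_distrib, ← Finset.sum_mul, h2, zero_mul, sub_zero]
    rfl
  have hfV : ∀ k : ↥V, f k = (Pi.single j 1 : ↥V → ℝ) k := by
    intro k
    simp only [hf, hGm, hc]; ring
  -- minimum principle
  have hfn : ∀ k, 0 ≤ f k := by
    set g : Fin n → ℝ := fun k => min (f k) 0 with hg
    have hgV : ∀ k ∈ V, g k = 0 := by
      intro k hk
      have := hfV ⟨k, hk⟩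
      simp only [hg] at *
      rw [this]
      apply min_eq_right
      simp only [Pi.single_apply]
      split_ifs <;> norm_num
    have h0 : ∑ a, g a * ∑ l, Q a l * f l = 0 := by
      refine Finset.sum_eq_zero fun a _ => ?_
      rw [hQf]
      by_cases ha : a ∈ V
      · rw [hgV a ha, zero_mul]
      · simp [extz, ha]
    have h1 : ∑ a, ∑ l, g a * Q a l * g l ≤ 0 := by
      rw [← h0]
      refine Finset.sum_le_sum fun a _ => ?_
      rw [Finset.mul_sum]
      refine Finset.sum_le_sum fun l _ => ?_
      have hga : g a ≤ 0 := min_le_right _ _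
      have hgl : g l ≤ f l := min_le_left _ _
      by_cases hal : a = l
      · subst hal
        apply le_of_eq
        rcases le_total (f a) 0 with h | h
        · have : g a = f a := min_eq_left h
          rw [this]; ring
        · have : g a = 0 := min_eq_right h
          rw [this]; ring
      · have := mul_nonneg (mul_nonneg_of_nonpos_of_nonpos hga (hQ.2.1 a l hal)) (sub_nonneg.2 hgl)
        nlinarith
    intro k
    have hk := lap_energy hQ g h1 k j
    rw [hgV j j.2] at hk
    exact min_eq_right_iff.1 hk
  have hbi : B i j = b i := by
    simp [hb]
  have hbe : extz V b i = b i := by simp [extz]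
  rw [hbi, ← hbe, ← hQf]
  refine Finset.sum_nonpos fun l _ => ?_
  by_cases hl : (i : Fin n) = l
  · rw [← hl, hfV, Pi.single_eq_of_ne hij, mul_zero]
  · exact mul_nonpos_of_nonpos_of_nonneg (hQ.2.1 _ _ hl) (hfn l)
end
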